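/- Consider a two-player zero-sum normal-form game with n × m payoff (loss) matrix A, where player 1 plays x ∈ Δ^n to minimize xᵀAy and player 2 plays y ∈ Δ^m to maximize it. Let w¹, …, wᵀ > 0 and τ¹, …, τᵀ > 0 be such that t ↦ τ^t/w^t is non-increasing, and let v_x¹, …, v_xᵀ ∈ ℝ^n and v_y¹, …, v_yᵀ ∈ ℝ^m be prediction vectors. Suppose both players run PWCFR+ simultaneously: R_x⁰ = 0, R_y⁰ = 0, and for 1 ≤ t ≤ T: R̃_x^t = [R_x^{t−1} + w^t v_x^t]⁺, R̃_y^t = [R_y^{t−1} + w^t v_y^t]⁺; x^t = N(R̃_x^t), y^t = N(R̃_y^t); ℓ_x^t = A y^t, ℓ_y^t = −Aᵀ x^t; r_x^t = ⟨ℓ_x^t, x^t⟩·𝟏 − ℓ_x^t, r_y^t = ⟨ℓ_y^t, y^t⟩·𝟏 − ℓ_y^t; R_x^t = [R_x^{t−1} + w^t r_x^t]⁺, R_y^t = [R_y^{t−1} + w^t r_y^t]⁺. Let x̄ = (Σ_t τ^t x^t)/(Σ_t τ^t) and ȳ = (Σ_t τ^t y^t)/(Σ_t τ^t). Then (x̄,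 ȳ) is an ε-Nash equilibrium with ε = ( √(2(τ¹/w¹) Σ_t τ^t w^t ‖r_x^t − v_x^t‖₂²) + √(2(τ¹/w¹) Σ_t τ^t w^t ‖r_y^t − v_y^t‖₂²) ) / (Σ_t τ^t), i.e. x̄ᵀAȳ − min_{x′∈Δ^n} x′ᵀAȳ ≤ ε and max_{y′∈Δ^m} x̄ᵀAy′ − x̄ᵀAȳ ≤ ε. -/

import Mathlib

open Finset Matrix
open scoped Classical

/-- Euclidean dot product on `Fin n → ℝ`. -/
def dotp {n : ℕ} (a b : Fin n → ℝ) : ℝ := ∑ i, a i * b i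

/-- Componentwise positive part. -/
def clipPos {n : ℕ} (v : Fin n → ℝ) : Fin n → ℝ := fun i => max (v i) 0

/-- Normalization `N(v) = v / ‖v‖₁`, with `N(0)` the uniform distribution. -/
noncomputable def nmz {n : ℕ} (v : Fin n → ℝ) : Fin n → ℝ :=
  if v = 0 then (fun _ => (1 : ℝ) / n) else fun i => v i / ∑ j, |v j|

/-!
The cumulative regrets of PWCFR+ are iterates of optimistic mirror descent on the nonnegative
orthant. As the orthant is a cone, this bounds the weighted regret against *every* nonnegative
comparator, and since the strategy is proportional to the optimistic iterate, to which the
instantaneous regret is orthogonal, only the comparator enters the bound. Comparing with `l • x'`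
for `x'` in the simplex, the weighted regret `G` against `x'` satisfies `2 l G ≤ a l ^ 2 + K` for
all `l ≥ 0`, where `a = τ 1 / w 1` and `K = ∑ t, τ t * w t * ‖r t - v t‖ ^ 2`. Optimizing over `l`
yields `G ≤ √(a K)`, which improves on the claimed `√(2 a K)`. The regrets of the two players add up
to the duality gap of the average strategies.
-/

section Orthant

variable {ι 𝕜 : Type*} [Fintype ι] [CommRing 𝕜] [LinearOrder 𝕜] [IsStrictOrderedRing 𝕜]

lemma sub_posPart_mul_sub_posPart_nonpos (a : 𝕜) {u : 𝕜} (hu : 0 ≤ u) :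
    (a - a⁺) * (u - a⁺) ≤ 0 := by
  rcases le_total a 0 with ha | ha
  · rw [posPart_of_nonpos ha, sub_zero, sub_zero]
    exact mul_nonpos_of_nonpos_of_nonneg ha hu
  · rw [posPart_of_nonneg ha, sub_self, zero_mul]

lemma two_mul_mul_sub_posPart_le (z r v : 𝕜) {u : 𝕜} (hu : 0 ≤ u) :
    2 * (r * (u - (z + v)⁺)) ≤ (u - z) ^ 2 - (u - (z + r)⁺) ^ 2 + (r - v) ^ 2 := by
  -- First-order optimality of the projection `(z + r)⁺` against `u`, and of `(z + v)⁺` against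
  -- `(z + r)⁺`.
  have hr := sub_posPart_mul_sub_posPart_nonpos (z + r) hu
  have hv := sub_posPart_mul_sub_posPart_nonpos (z + v) (posPart_nonneg (z + r))
  have hrv := sq_nonneg (r - v - ((z + r)⁺ - (z + v)⁺))
  have hz := sq_nonneg ((z + v)⁺ - z)
  linear_combination 2 * hr + 2 * hv + hrv + hz

lemma two_mul_dotProduct_sub_posPart_le (z r v : ι → 𝕜) {u : ι → 𝕜} (hu : 0 ≤ u) :
    2 * (r ⬝ᵥ (u - (z + v)⁺)) ≤
      ∑ i, (u i - z i) ^ 2 - ∑ i, (u i - (z + r)⁺ i) ^ 2 + ∑ i, (r i - v i) ^ 2 := by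
  rw [dotProduct, mul_sum, ← sum_sub_distrib, ← sum_add_distrib]
  exact sum_le_sum fun i _ => two_mul_mul_sub_posPart_le (z i) (r i) (v i) (hu i)

lemma sum_Icc_mul_sub_le_of_antitone {c D : ℕ → 𝕜} {T : ℕ} (hT : 1 ≤ T)
    (hc : ∀ t, 1 ≤ t → t < T → c (t + 1) ≤ c t) (hD : ∀ t, 0 ≤ D t) :
    ∑ t ∈ Icc 1 T, c t * (D (t - 1) - D t) ≤ c 1 * D 0 - c T * D T := by
  induction T, hT using Nat.le_induction with
  | base => simp [mul_sub]
  | succ T hT ih =>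
    have ih := ih fun t h₁ h₂ => hc t h₁ (h₂.trans T.lt_succ_self)
    have hstep := mul_le_mul_of_nonneg_right (hc T hT T.lt_succ_self) (hD T)
    rw [sum_Icc_succ_top (by lia), Nat.add_sub_cancel]
    linear_combination ih + hstep

lemma sum_sq_le_one_of_mem_stdSimplex {x : ι → 𝕜} (hx : x ∈ stdSimplex 𝕜 ι) :
    ∑ i, x i ^ 2 ≤ 1 := by
  simpa only [hx.2, one_pow] using sum_sq_le_sq_sum_of_nonneg (s := univ) fun i _ => hx.1 i

end Orthant

section OptimisticDescent

variable {ι 𝕜 : Type*} [Fintype ι] [Field 𝕜] [LinearOrder 𝕜] [IsStrictOrderedRing 𝕜]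

lemma two_mul_dotProduct_sub_posPart_smul_le {w : 𝕜} (hw : 0 < w) (z r v : ι → 𝕜) {u : ι → 𝕜}
    (hu : 0 ≤ u) :
    2 * (r ⬝ᵥ (u - (z + w • v)⁺)) ≤
      w⁻¹ * (∑ i, (u i - z i) ^ 2 - ∑ i, (u i - (z + w • r)⁺ i) ^ 2)
        + w * ∑ i, (r i - v i) ^ 2 := by
  have h := two_mul_dotProduct_sub_posPart_le z (w • r) (w • v) hu
  simp only [smul_dotProduct, Pi.smul_apply, smul_eq_mul, ← mul_sub, mul_pow, ← mul_sum] at h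
  refine le_of_mul_le_mul_left ?_ hw
  rw [mul_add, mul_inv_cancel_left₀ hw.ne']
  linear_combination h

lemma two_mul_sum_dotProduct_sub_posPart_le {T : ℕ} (hT : 1 ≤ T) {w τ : ℕ → 𝕜}
    (hw : ∀ t ∈ Icc 1 T, 0 < w t) (hτ : ∀ t ∈ Icc 1 T, 0 < τ t)
    (hmono : ∀ t, 1 ≤ t → t < T → τ (t + 1) / w (t + 1) ≤ τ t / w t)
    {R r : ℕ → ι → 𝕜} (hR : ∀ t ∈ Icc 1 T, R t = (R (t - 1) + w t • r t)⁺)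
    (v : ℕ → ι → 𝕜) {u : ι → 𝕜} (hu : 0 ≤ u) :
    2 * ∑ t ∈ Icc 1 T, τ t * (r t ⬝ᵥ (u - (R (t - 1) + w t • v t)⁺)) ≤
      τ 1 / w 1 * ∑ i, (u i - R 0 i) ^ 2
        + ∑ t ∈ Icc 1 T, τ t * w t * ∑ i, (r t i - v t i) ^ 2 := by
  set D : ℕ → 𝕜 := fun t => ∑ i, (u i - R t i) ^ 2
  have hD_nonneg (t : ℕ) : 0 ≤ D t := sum_nonneg fun i _ => sq_nonneg _
  have hstep : ∀ t ∈ Icc 1 T, 2 * (τ t * (r t ⬝ᵥ (u - (R (t - 1) + w t • v t)⁺))) ≤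
      τ t / w t * (D (t - 1) - D t) + τ t * w t * ∑ i, (r t i - v t i) ^ 2 := by
    intro t ht
    have h := mul_le_mul_of_nonneg_left
      (two_mul_dotProduct_sub_posPart_smul_le (hw t ht) (R (t - 1)) (r t) (v t) hu) (hτ t ht).le
    rw [← hR t ht] at h
    linear_combination h
  have hlast : 0 ≤ τ T / w T * D T :=
    mul_nonneg (div_pos (hτ T (by simpa)) (hw T (by simpa))).le (hD_nonneg T)
  have htelescope : ∑ t ∈ Icc 1 T, τ t / w t * (D (t - 1) - D t) ≤ τ 1 / w 1 * D 0 :=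
    (sum_Icc_mul_sub_le_of_antitone (c := fun t => τ t / w t) hT hmono hD_nonneg).trans
      (sub_le_self _ hlast)
  rw [mul_sum]
  refine (sum_le_sum hstep).trans ?_
  rw [sum_add_distrib]
  gcongr

end OptimisticDescent

lemma le_sqrt_mul_of_forall_two_mul_mul_le {a G K : ℝ} (ha : 0 < a)
    (h : ∀ l, 0 ≤ l → 2 * (l * G) ≤ a * l ^ 2 + K) : G ≤ √(a * K) := by
  rcases le_total G 0 with hG | hG
  · exact hG.trans (Real.sqrt_nonneg _)
  · apply Real.le_sqrt_of_sq_le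
    have hmin := mul_le_mul_of_nonneg_left (h (G / a) (by positivity)) ha.le
    field_simp at hmin
    linear_combination hmin

lemma sqrt_mul_le_sqrt_two_mul_mul (a K : ℝ) : √(a * K) ≤ √(2 * a * K) := by
  rw [mul_assoc, Real.sqrt_mul zero_le_two]
  exact le_mul_of_one_le_left (Real.sqrt_nonneg _) (Real.one_le_sqrt.mpr one_le_two)

section RegretMatching

variable {ι : Type*} [Fintype ι]

/-- The instantaneous regret `⟨ℓ, x⟩ 𝟏 - ℓ` of playing the mixed strategy `x` against the loss
vector `ℓ`. -/
def instRegret (ℓ x : ι → ℝ) : ι → ℝ := fun i => ℓ ⬝ᵥ x - ℓ i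

lemma instRegret_dotProduct_of_sum_eq_one (ℓ x : ι → ℝ) {u : ι → ℝ} (hu : ∑ i, u i = 1) :
    instRegret ℓ x ⬝ᵥ u = ℓ ⬝ᵥ x - ℓ ⬝ᵥ u := by
  have hsmul : instRegret ℓ x = (ℓ ⬝ᵥ x) • 1 - ℓ := by
    ext i
    simp only [instRegret, Pi.sub_apply, Pi.smul_apply, Pi.one_apply, smul_eq_mul, mul_one]
  rw [hsmul, sub_dotProduct, smul_dotProduct, one_dotProduct, hu, smul_eq_mul, mul_one]

/-- `IsPWCFRPlus T w v ℓ R x r` says that in the rounds `1, …, T` the strategies `x`, the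
instantaneous regrets `r` and the cumulative regrets `R` are those of PWCFR+ at a single decision
node, with regret weights `w` and predictions `v`, facing the losses `ℓ`. Normalization is encoded
by requiring the clipped prediction to be a multiple of the strategy, which leaves the strategy free
where the clipped prediction vanishes. -/
structure IsPWCFRPlus (T : ℕ) (w : ℕ → ℝ) (v ℓ R x r : ℕ → ι → ℝ) : Prop where
  regret_zero : R 0 = 0
  mem_stdSimplex : ∀ t ∈ Icc 1 T, x t ∈ stdSimplex ℝ ι
  exists_eq_smul : ∀ t ∈ Icc 1 T, ∃ s : ℝ, (R (t - 1) + w t • v t)⁺ = s • x t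
  eq_instRegret : ∀ t ∈ Icc 1 T, r t = instRegret (ℓ t) (x t)
  regret_eq : ∀ t ∈ Icc 1 T, R t = (R (t - 1) + w t • r t)⁺

namespace IsPWCFRPlus

variable {T : ℕ} {w τ : ℕ → ℝ} {v ℓ R x r : ℕ → ι → ℝ}

lemma dotProduct_posPart_eq_zero (h : IsPWCFRPlus T w v ℓ R x r) {t : ℕ} (ht : t ∈ Icc 1 T) :
    r t ⬝ᵥ (R (t - 1) + w t • v t)⁺ = 0 := by
  obtain ⟨s, hs⟩ := h.exists_eq_smul t ht
  rw [hs, dotProduct_smul, h.eq_instRegret t ht,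
    instRegret_dotProduct_of_sum_eq_one _ _ (h.mem_stdSimplex t ht).2, sub_self, smul_zero]

lemma two_mul_sum_dotProduct_le (h : IsPWCFRPlus T w v ℓ R x r) (hT : 1 ≤ T)
    (hw : ∀ t ∈ Icc 1 T, 0 < w t) (hτ : ∀ t ∈ Icc 1 T, 0 < τ t)
    (hmono : ∀ t, 1 ≤ t → t < T → τ (t + 1) / w (t + 1) ≤ τ t / w t)
    {u : ι → ℝ} (hu : 0 ≤ u) :
    2 * ∑ t ∈ Icc 1 T, τ t * (r t ⬝ᵥ u) ≤
      τ 1 / w 1 * ∑ i, u i ^ 2 + ∑ t ∈ Icc 1 T, τ t * w t * ∑ i, (r t i - v t i) ^ 2 := by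
  have hsum := two_mul_sum_dotProduct_sub_posPart_le hT hw hτ hmono h.regret_eq v hu
  simp only [h.regret_zero, Pi.zero_apply, sub_zero] at hsum
  refine le_of_eq_of_le (congrArg (2 * ·) (sum_congr rfl fun t ht => ?_)) hsum
  rw [dotProduct_sub, h.dotProduct_posPart_eq_zero ht, sub_zero]

theorem sum_regret_le (h : IsPWCFRPlus T w v ℓ R x r) (hT : 1 ≤ T)
    (hw : ∀ t ∈ Icc 1 T, 0 < w t) (hτ : ∀ t ∈ Icc 1 T, 0 < τ t)
    (hmono : ∀ t, 1 ≤ t → t < T → τ (t + 1) / w (t + 1) ≤ τ t / w t)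
    {x' : ι → ℝ} (hx' : x' ∈ stdSimplex ℝ ι) :
    ∑ t ∈ Icc 1 T, τ t * (ℓ t ⬝ᵥ x t - ℓ t ⬝ᵥ x') ≤
      √(τ 1 / w 1 * ∑ t ∈ Icc 1 T, τ t * w t * ∑ i, (r t i - v t i) ^ 2) := by
  have hratio : 0 < τ 1 / w 1 := div_pos (hτ 1 (by simpa)) (hw 1 (by simpa))
  refine le_sqrt_mul_of_forall_two_mul_mul_le hratio fun l hl => ?_
  have hregret : ∀ t ∈ Icc 1 T,
      l * (τ t * (ℓ t ⬝ᵥ x t - ℓ t ⬝ᵥ x')) = τ t * (r t ⬝ᵥ (l • x')) := by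
    intro t ht
    rw [h.eq_instRegret t ht, dotProduct_smul,
      instRegret_dotProduct_of_sum_eq_one _ _ hx'.2, smul_eq_mul, mul_left_comm]
  have hnorm : ∑ i, (l • x') i ^ 2 ≤ l ^ 2 := by
    simp only [Pi.smul_apply, smul_eq_mul, mul_pow, ← mul_sum]
    exact mul_le_of_le_one_right (sq_nonneg l) (sum_sq_le_one_of_mem_stdSimplex hx')
  rw [mul_sum, sum_congr rfl hregret]
  refine (h.two_mul_sum_dotProduct_le hT hw hτ hmono (smul_nonneg hl hx'.1)).trans ?_
  gcongr

end IsPWCFRPlus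

end RegretMatching

section Normalization

variable {n : ℕ}

lemma nmz_mem_stdSimplex (hn : 0 < n) {v : Fin n → ℝ} (hv : 0 ≤ v) :
    nmz v ∈ stdSimplex ℝ (Fin n) := by
  unfold nmz
  split_ifs with h
  · have : (n : ℝ) ≠ 0 := by positivity
    exact ⟨fun i => by positivity, by simp [this]⟩
  · have habs : ∑ j, |v j| = ∑ j, v j := sum_congr rfl fun j _ => abs_of_nonneg (hv j)
    have hsum : 0 < ∑ j, v j := Fintype.sum_pos (lt_of_le_of_ne hv (Ne.symm h))
    rw [habs]
    exact ⟨fun i => div_nonneg (hv i) hsum.le, by rw [← sum_div, div_self hsum.ne']⟩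

lemma sum_abs_smul_nmz (v : Fin n → ℝ) : (∑ j, |v j|) • nmz v = v := by
  unfold nmz
  split_ifs with h
  · simp [h]
  · obtain ⟨i, hi⟩ := Function.ne_iff.mp h
    have hsum : ∑ j, |v j| ≠ 0 :=
      (sum_pos' (fun _ _ => abs_nonneg _) ⟨i, mem_univ i, abs_pos.mpr hi⟩).ne'
    exact funext fun i => mul_div_cancel₀ (v i) hsum

lemma IsPWCFRPlus.of_nmz (hn : 0 < n) {T : ℕ} {w : ℕ → ℝ} {v ℓ R Rt x r : ℕ → Fin n → ℝ}
    (hR0 : R 0 = 0)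
    (hRt : ∀ t ∈ Icc 1 T, Rt t = clipPos (fun i => R (t - 1) i + w t * v t i))
    (hx : ∀ t ∈ Icc 1 T, x t = nmz (Rt t))
    (hr : ∀ t ∈ Icc 1 T, r t = fun i => dotp (ℓ t) (x t) - ℓ t i)
    (hR : ∀ t ∈ Icc 1 T, R t = clipPos (fun i => R (t - 1) i + w t * r t i)) :
    IsPWCFRPlus T w v ℓ R x r where
  regret_zero := hR0
  mem_stdSimplex t ht := by
    rw [hx t ht, hRt t ht]
    exact nmz_mem_stdSimplex hn fun i => le_max_right _ _
  exists_eq_smul t ht := ⟨∑ j, |Rt t j|, by rw [hx t ht, sum_abs_smul_nmz, hRt t ht]; rfl⟩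
  eq_instRegret := hr
  regret_eq := hR

end Normalization

section CenterMass

variable {α ι κ 𝕜 : Type*} [Fintype ι] [Fintype κ] [Field 𝕜]

lemma centerMass_dotProduct (s : Finset α) (τ : α → 𝕜) (x : α → ι → 𝕜) (b : ι → 𝕜) :
    s.centerMass τ x ⬝ᵥ b = s.centerMass τ fun t => x t ⬝ᵥ b := by
  simp only [centerMass, smul_dotProduct, sum_dotProduct]

lemma dotProduct_mulVec_centerMass (A : Matrix ι κ 𝕜) (a : ι → 𝕜) (s : Finset α) (τ : α → 𝕜)
    (y : α → κ → 𝕜) :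
    a ⬝ᵥ A *ᵥ s.centerMass τ y = s.centerMass τ fun t => a ⬝ᵥ A *ᵥ y t := by
  simp only [centerMass, mulVec_smul, mulVec_sum, dotProduct_smul, dotProduct_sum]

end CenterMass

section ZeroSumGame

variable {ι κ : Type*} [Fintype ι] [Fintype κ] {A : Matrix ι κ ℝ}

/-- `IsApproxNash A x y ε` says that `(x, y)` is an `ε`-Nash equilibrium of the zero-sum game with
loss matrix `A`, in which `x` minimizes and `y` maximizes `x ⬝ᵥ A *ᵥ y`. -/
structure IsApproxNash (A : Matrix ι κ ℝ) (x : ι → ℝ) (y : κ → ℝ) (ε : ℝ) : Prop where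
  mem_left : x ∈ stdSimplex ℝ ι
  mem_right : y ∈ stdSimplex ℝ κ
  sub_le_left : ∀ x' ∈ stdSimplex ℝ ι, x ⬝ᵥ A *ᵥ y - x' ⬝ᵥ A *ᵥ y ≤ ε
  sub_le_right : ∀ y' ∈ stdSimplex ℝ κ, x ⬝ᵥ A *ᵥ y' - x ⬝ᵥ A *ᵥ y ≤ ε

lemma IsApproxNash.mono {x : ι → ℝ} {y : κ → ℝ} {ε ε' : ℝ} (h : IsApproxNash A x y ε)
    (hε : ε ≤ ε') : IsApproxNash A x y ε' where
  mem_left := h.mem_left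
  mem_right := h.mem_right
  sub_le_left x' hx' := (h.sub_le_left x' hx').trans hε
  sub_le_right y' hy' := (h.sub_le_right y' hy').trans hε

lemma IsApproxNash.of_forall_sub_le {x : ι → ℝ} {y : κ → ℝ} {ε : ℝ} (hx : x ∈ stdSimplex ℝ ι)
    (hy : y ∈ stdSimplex ℝ κ)
    (h : ∀ x' ∈ stdSimplex ℝ ι, ∀ y' ∈ stdSimplex ℝ κ, x ⬝ᵥ A *ᵥ y' - x' ⬝ᵥ A *ᵥ y ≤ ε) :
    IsApproxNash A x y ε :=
  ⟨hx, hy, fun x' hx' => h x' hx' y hy, fun y' hy' => h x hx y' hy'⟩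

variable {α : Type*} {s : Finset α} {τ : α → ℝ} {x : α → ι → ℝ} {y : α → κ → ℝ}

theorem IsApproxNash.of_sum_regret_le (hτ : ∀ t ∈ s, 0 ≤ τ t) (hτ_pos : 0 < ∑ t ∈ s, τ t)
    (hx : ∀ t ∈ s, x t ∈ stdSimplex ℝ ι) (hy : ∀ t ∈ s, y t ∈ stdSimplex ℝ κ) {εx εy : ℝ}
    (hεx : ∀ x' ∈ stdSimplex ℝ ι,
      ∑ t ∈ s, τ t * (x t ⬝ᵥ A *ᵥ y t - x' ⬝ᵥ A *ᵥ y t) ≤ εx)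
    (hεy : ∀ y' ∈ stdSimplex ℝ κ,
      ∑ t ∈ s, τ t * (x t ⬝ᵥ A *ᵥ y' - x t ⬝ᵥ A *ᵥ y t) ≤ εy) :
    IsApproxNash A (s.centerMass τ x) (s.centerMass τ y) ((εx + εy) / ∑ t ∈ s, τ t) := by
  refine .of_forall_sub_le ((convex_stdSimplex ℝ ι).centerMass_mem hτ hτ_pos hx)
    ((convex_stdSimplex ℝ κ).centerMass_mem hτ hτ_pos hy) fun x' hx' y' hy' => ?_
  calc s.centerMass τ x ⬝ᵥ A *ᵥ y' - x' ⬝ᵥ A *ᵥ s.centerMass τ y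
      = (∑ t ∈ s, τ t * (x t ⬝ᵥ A *ᵥ y t - x' ⬝ᵥ A *ᵥ y t)
        + ∑ t ∈ s, τ t * (x t ⬝ᵥ A *ᵥ y' - x t ⬝ᵥ A *ᵥ y t)) / ∑ t ∈ s, τ t := by
        rw [centerMass_dotProduct, dotProduct_mulVec_centerMass]
        simp only [centerMass, smul_eq_mul, mul_sub, sum_sub_distrib]
        ring
    _ ≤ (εx + εy) / ∑ t ∈ s, τ t := by
        gcongr
        exacts [hεx x' hx', hεy y' hy']

theorem stmt14_general {T : ℕ} (hT : 1 ≤ T) (A : Matrix ι κ ℝ) {w τ : ℕ → ℝ}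
    (hw : ∀ t ∈ Icc 1 T, 0 < w t) (hτ : ∀ t ∈ Icc 1 T, 0 < τ t)
    (hmono : ∀ t, 1 ≤ t → t < T → τ (t + 1) / w (t + 1) ≤ τ t / w t)
    {vx ℓx Rx x rx : ℕ → ι → ℝ} {vy ℓy Ry y ry : ℕ → κ → ℝ}
    (hℓx : ∀ t ∈ Icc 1 T, ℓx t = A *ᵥ y t) (hℓy : ∀ t ∈ Icc 1 T, ℓy t = -(Aᵀ *ᵥ x t))
    (hx : IsPWCFRPlus T w vx ℓx Rx x rx) (hy : IsPWCFRPlus T w vy ℓy Ry y ry) :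
    IsApproxNash A ((Icc 1 T).centerMass τ x) ((Icc 1 T).centerMass τ y)
      ((√(τ 1 / w 1 * ∑ t ∈ Icc 1 T, τ t * w t * ∑ i, (rx t i - vx t i) ^ 2)
        + √(τ 1 / w 1 * ∑ t ∈ Icc 1 T, τ t * w t * ∑ j, (ry t j - vy t j) ^ 2))
        / ∑ t ∈ Icc 1 T, τ t) := by
  refine .of_sum_regret_le (fun t ht => (hτ t ht).le) (sum_pos hτ ⟨1, by simpa⟩)
    hx.mem_stdSimplex hy.mem_stdSimplex (fun x' hx' => ?_) (fun y' hy' => ?_)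
  · refine le_of_eq_of_le (sum_congr rfl fun t ht => ?_) (hx.sum_regret_le hT hw hτ hmono hx')
    rw [hℓx t ht, dotProduct_comm (x t), dotProduct_comm x']
  · refine le_of_eq_of_le (sum_congr rfl fun t ht => ?_) (hy.sum_regret_le hT hw hτ hmono hy')
    simp only [hℓy t ht, neg_dotProduct, mulVec_transpose, ← dotProduct_mulVec]
    ring

end ZeroSumGame

/-- Theorem 4 of the paper instantiated on a two-player zero-sum normal-form game with
loss matrix `A`: if both players run PWCFR+ with weights `w` for regrets, `τ` for
average strategies (`τᵗ/wᵗ` non-increasing) and prediction vectors `vx`, `vy`, the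
`τ`-weighted average strategy profile `(x̄, ȳ)` is an `ε`-Nash equilibrium with
`ε = (√(2(τ¹/w¹)Σ τᵗwᵗ‖r_xᵗ − v_xᵗ‖₂²) + √(2(τ¹/w¹)Σ τᵗwᵗ‖r_yᵗ − v_yᵗ‖₂²))/(Σ τᵗ)`. -/
theorem stmt14 (n m T : ℕ) (hn : 0 < n) (hm : 0 < m) (hT : 1 ≤ T)
    (A : Matrix (Fin n) (Fin m) ℝ)
    (w τ : ℕ → ℝ)
    (hw : ∀ t ∈ Icc 1 T, 0 < w t) (hτ : ∀ t ∈ Icc 1 T, 0 < τ t)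
    (hmono : ∀ t, 1 ≤ t → t < T → τ (t + 1) / w (t + 1) ≤ τ t / w t)
    (vx : ℕ → Fin n → ℝ) (vy : ℕ → Fin m → ℝ)
    (Rx Rtx : ℕ → Fin n → ℝ) (Ry Rty : ℕ → Fin m → ℝ)
    (x rx : ℕ → Fin n → ℝ) (y ry : ℕ → Fin m → ℝ)
    (ℓx : ℕ → Fin n → ℝ) (ℓy : ℕ → Fin m → ℝ)
    (hRx0 : Rx 0 = 0) (hRy0 : Ry 0 = 0)
    (hRtx : ∀ t ∈ Icc 1 T, Rtx t = clipPos (fun i => Rx (t - 1) i + w t * vx t i))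
    (hRty : ∀ t ∈ Icc 1 T, Rty t = clipPos (fun j => Ry (t - 1) j + w t * vy t j))
    (hx : ∀ t ∈ Icc 1 T, x t = nmz (Rtx t))
    (hy : ∀ t ∈ Icc 1 T, y t = nmz (Rty t))
    (hℓx : ∀ t ∈ Icc 1 T, ℓx t = A.mulVec (y t))
    (hℓy : ∀ t ∈ Icc 1 T, ℓy t = -(Aᵀ.mulVec (x t)))
    (hrx : ∀ t ∈ Icc 1 T, rx t = fun i => dotp (ℓx t) (x t) - ℓx t i)
    (hry : ∀ t ∈ Icc 1 T, ry t = fun j => dotp (ℓy t) (y t) - ℓy t j)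
    (hRx : ∀ t ∈ Icc 1 T, Rx t = clipPos (fun i => Rx (t - 1) i + w t * rx t i))
    (hRy : ∀ t ∈ Icc 1 T, Ry t = clipPos (fun j => Ry (t - 1) j + w t * ry t j)) :
    let S : ℝ := ∑ t ∈ Icc 1 T, τ t
    let xbar : Fin n → ℝ := S⁻¹ • ∑ t ∈ Icc 1 T, τ t • x t
    let ybar : Fin m → ℝ := S⁻¹ • ∑ t ∈ Icc 1 T, τ t • y t
    let ε : ℝ :=
      (Real.sqrt (2 * (τ 1 / w 1)
          * ∑ t ∈ Icc 1 T, τ t * w t * ∑ i, (rx t i - vx t i) ^ 2)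
        + Real.sqrt (2 * (τ 1 / w 1)
          * ∑ t ∈ Icc 1 T, τ t * w t * ∑ j, (ry t j - vy t j) ^ 2)) / S
    (∀ x' ∈ stdSimplex ℝ (Fin n),
      dotp xbar (A.mulVec ybar) - dotp x' (A.mulVec ybar) ≤ ε) ∧
    (∀ y' ∈ stdSimplex ℝ (Fin m),
      dotp xbar (A.mulVec y') - dotp xbar (A.mulVec ybar) ≤ ε) := by
  intro S xbar ybar ε
  have hnash := stmt14_general hT A hw hτ hmono hℓx hℓy
    (.of_nmz hn hRx0 hRtx hx hrx hRx) (.of_nmz hm hRy0 hRty hy hry hRy)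
  have hS : 0 ≤ S := sum_nonneg fun t ht => (hτ t ht).le
  have hε : IsApproxNash A xbar ybar ε := hnash.mono <| div_le_div_of_nonneg_right
    (add_le_add (sqrt_mul_le_sqrt_two_mul_mul _ _) (sqrt_mul_le_sqrt_two_mul_mul _ _)) hS
  exact ⟨hε.sub_le_left, hε.sub_le_right⟩
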